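/- arXiv:2602.14072 — 2 statements merged into one kernel-verified Lean document; each statement's English description precedes it below -/
import Mathlib

section
/- Let n ≥ 2, 0 < σ < 1, and F(s) = ₂F₁((n-2σ)/4, (n-2σ)/4; n/2; s). Then ∫₀¹ s^{n/2 - 1} (1-s)^{-σ} ( s(1-s) F'(s)² + ((n-2σ)/4)² F(s)² ) ds = Γ(n/2)² Γ(σ) Γ(1-σ) / ( Γ((n-2σ)/4)² Γ((n+2σ)/4)² ). -/
/-- The Gauss hypergeometric function, defined by its series. -/
noncomputable def hyp2F1 (a b c z : ℝ) : ℝ :=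
  ∑' s : ℕ, ((ascPochhammer ℝ s).eval a * (ascPochhammer ℝ s).eval b /
    (ascPochhammer ℝ s).eval c) * z ^ s / (Nat.factorial s : ℝ)

open Filter Topology Set MeasureTheory

theorem hasSum_binom (a x : ℝ) (hx : |x| < 1) :
    HasSum (fun k : ℕ => (ascPochhammer ℝ k).eval a / (k.factorial : ℝ) * x ^ k)
      (1 / (1 - x) ^ a) := by
  have h := (Real.one_div_one_sub_rpow_hasFPowerSeriesOnBall_zero a).hasSum (y := x)
    (by simpa [enorm_eq_nnnorm] using! hx)
  simp only [zero_add] at h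
  convert! h using 2 with k
  rw [FormalMultilinearSeries.apply_eq_prod_smul_coeff]
  simp only [Finset.prod_const, Finset.card_univ, Fintype.card_fin,
    FormalMultilinearSeries.coeff_ofScalars, smul_eq_mul]
  rw [mul_comm]
  congr 1
  have h2 := Ring.factorial_nsmul_multichoose_eq_ascPochhammer a k
  rw [Polynomial.ascPochhammer_smeval_eq_eval] at h2
  have : Ring.choose (a + k - 1) k = Ring.multichoose a k := by
    unfold Ring.choose; congr 1; ring
  rw [this, ← h2, nsmul_eq_mul]
  field_simp

theorem abel_ratio (u v : ℕ → ℝ) (L : ℝ) (U V : ℝ → ℝ) (hv : ∀ k, 0 < v k)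
    (huv : Tendsto (fun k => u k / v k) atTop (𝓝 L))
    (hU : ∀ s ∈ Ioo (0:ℝ) 1, HasSum (fun k => u k * s ^ k) (U s))
    (hV : ∀ s ∈ Ioo (0:ℝ) 1, HasSum (fun k => v k * s ^ k) (V s))
    (hVt : Tendsto V (𝓝[<] 1) atTop) :
    Tendsto (fun s => U s / V s) (𝓝[<] 1) (𝓝 L) := by
  rw [Metric.tendsto_nhds]
  intro ε hε
  have h1 := (Metric.tendsto_nhds.1 huv) (ε/2) (by positivity)
  obtain ⟨N, hN⟩ := eventually_atTop.1 h1
  set M : ℝ := ∑ k ∈ Finset.range N, |u k - L * v k| with hM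
  have hM0 : 0 ≤ M := Finset.sum_nonneg fun _ _ => abs_nonneg _
  have hmem : ∀ᶠ s in 𝓝[<] (1:ℝ), s ∈ Ioo (0:ℝ) 1 := Ioo_mem_nhdsLT (by norm_num)
  filter_upwards [hmem, hVt.eventually_gt_atTop (2 * M / ε), hVt.eventually_gt_atTop 0]
    with s hs hVs hV0
  have hd : HasSum (fun k => (u k - L * v k) * s ^ k) (U s - L * V s) := by
    convert! (hU s hs).sub ((hV s hs).mul_left L) using 2 with k
    ring
  have he : HasSum (fun k => (if k ∈ Finset.range N then |u k - L * v k| else 0)) M := by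
    have := hasSum_sum_of_ne_finset_zero (f := fun k => (if k ∈ Finset.range N then |u k - L * v k| else 0)) (s := Finset.range N) (fun b hb => by simp only [if_neg hb]) (L := .unconditional _)
    rwa [Finset.sum_congr rfl (fun k hk => if_pos hk)] at this
  have hb : HasSum (fun k => ε/2 * (v k * s ^ k) + (if k ∈ Finset.range N then |u k - L * v k| else 0))
      (ε/2 * V s + M) := ((hV s hs).mul_left _).add he
  have hle : ∀ k, |(u k - L * v k) * s ^ k| ≤
      ε/2 * (v k * s ^ k) + (if k ∈ Finset.range N then |u k - L * v k| else 0) := by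
    intro k
    have hsk : 0 < s ^ k := pow_pos hs.1 k
    have hsk1 : s ^ k ≤ 1 := pow_le_one₀ hs.1.le hs.2.le
    rw [abs_mul, abs_of_pos hsk]
    split_ifs with hk
    · have := mul_le_mul_of_nonneg_left hsk1 (abs_nonneg (u k - L * v k))
      have : 0 < ε/2 * (v k * s ^ k) := by have := hv k; positivity
      linarith
    · have hk' : N ≤ k := by simpa using hk
      have := hN k hk'
      rw [Real.dist_eq] at this
      have hvk := hv k
      have e : u k - L * v k = (u k / v k - L) * v k := by field_simp
      rw [e, abs_mul, abs_of_pos hvk, add_zero, ← mul_assoc]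
      gcongr
  have hfin : |U s - L * V s| ≤ ε/2 * V s + M := by
    rw [abs_le]
    constructor
    · have := hasSum_le (fun k => neg_le_of_abs_le (hle k)) hb.neg hd
      linarith
    · exact hasSum_le (fun k => le_of_abs_le (hle k)) hd hb
  rw [Real.dist_eq, show U s / V s - L = (U s - L * V s) / V s by field_simp, abs_div,
    abs_of_pos hV0, div_lt_iff₀ hV0]
  have : 2 * M < V s * ε := (div_lt_iff₀ hε).1 hVs
  linarith

theorem poch_prod (x : ℝ) (k : ℕ) :
    (ascPochhammer ℝ k).eval x = ∏ j ∈ Finset.range k, (x + j) := by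
  induction k with
  | zero => simp
  | succ k ih => rw [ascPochhammer_succ_eval, Finset.prod_range_succ, ih]

theorem poch_asymp (x : ℝ) (hx : 0 < x) :
    Tendsto (fun k : ℕ => (ascPochhammer ℝ (k+1)).eval x / ((k.factorial : ℝ) * (k:ℝ) ^ x)) atTop
      (𝓝 (1 / Real.Gamma x)) := by
  have h := (Real.GammaSeq_tendsto_Gamma x).inv₀ (Real.Gamma_pos_of_pos hx).ne'
  rw [one_div]
  refine h.congr fun k => ?_
  rw [Real.GammaSeq, inv_div, poch_prod, mul_comm ((k:ℝ) ^ x)]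

theorem summable_poly (u : ℕ → ℝ) (C : ℝ) (p : ℕ) (hu : ∀ k, |u k| ≤ C * ((k:ℝ)+1)^p)
    (r : ℝ) (hr0 : 0 ≤ r) (hr : r < 1) : Summable (fun k => |u k| * r ^ k) := by
  rcases hr0.eq_or_lt with h | h
  · subst h
    apply summable_of_ne_finset_zero (s := {0})
    intro b hb
    simp at hb
    simp [hb]
  have h1 : Summable (fun k : ℕ => (((k+1 : ℕ):ℝ))^p * r^(k+1)) :=
    (summable_nat_add_iff (f := fun k : ℕ => ((k:ℝ))^p * r^k) 1).2
      (summable_pow_mul_geometric_of_norm_lt_one p (by rwa [Real.norm_eq_abs, abs_of_pos h]))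
  refine Summable.of_nonneg_of_le (fun k => by positivity) (fun k => ?_) (h1.mul_left (C / r))
  have : |u k| * r ^ k ≤ (C * ((k:ℝ)+1)^p) * r ^ k := by gcongr; exact hu k
  refine this.trans (le_of_eq ?_)
  push_cast
  field_simp
  ring

theorem hasSum_poly (u : ℕ → ℝ) (C : ℝ) (p : ℕ) (hu : ∀ k, |u k| ≤ C * ((k:ℝ)+1)^p)
    (x : ℝ) (hx : |x| < 1) : HasSum (fun k => u k * x ^ k) (∑' k, u k * x ^ k) := by
  apply Summable.hasSum
  apply Summable.of_norm
  simpa [abs_mul, abs_pow] using summable_poly u C p hu |x| (abs_nonneg _) hx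

theorem poly_deriv_bound (u : ℕ → ℝ) (C : ℝ) (p : ℕ) (hu : ∀ k, |u k| ≤ C * ((k:ℝ)+1)^p) :
    ∀ k : ℕ, |((k:ℝ)+1) * u (k+1)| ≤ (C * 2^p) * ((k:ℝ)+1)^(p+1) := by
  intro k
  have hC : 0 ≤ C := by have := (abs_nonneg _).trans (hu 0); simpa using this
  rw [abs_mul, abs_of_pos (by positivity)]
  have h := hu (k+1)
  push_cast at h
  have : C * ((k:ℝ)+1+1)^p ≤ C * (2 * ((k:ℝ)+1))^p := by
    gcongr; have : (0:ℝ) ≤ k := by positivity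
    linarith
  rw [mul_pow] at this
  calc _ ≤ ((k:ℝ)+1) * (C * (2^p * ((k:ℝ)+1)^p)) := by gcongr; exact h.trans this
    _ = _ := by ring

theorem hasDerivAt_poly (u : ℕ → ℝ) (C : ℝ) (p : ℕ) (hu : ∀ k, |u k| ≤ C * ((k:ℝ)+1)^p)
    (x : ℝ) (hx : |x| < 1) :
    HasDerivAt (fun x => ∑' k, u k * x ^ k) (∑' k : ℕ, (((k:ℝ)+1) * u (k+1)) * x ^ k) x := by
  obtain ⟨r, hxr, hr1⟩ := exists_between hx
  have hr0 : 0 < r := (abs_nonneg x).trans_lt hxr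
  have hS : Summable (fun k : ℕ => |u k| * ((k:ℝ) * r ^ (k-1))) := by
    rw [← summable_nat_add_iff 1]
    refine (summable_poly _ _ _ (poly_deriv_bound u C p hu) r hr0.le hr1).congr fun k => ?_
    rw [abs_mul, abs_of_pos (by positivity)]
    push_cast
    ring
  have hmem : ∀ y, y ∈ Ioo (-r) r → |y| < r := fun y hy => abs_lt.2 hy
  have h := hasDerivAt_tsum_of_isPreconnected (𝕜 := ℝ) (g := fun k x => u k * x ^ k)
    (g' := fun (k:ℕ) x => u k * ((k:ℝ) * x ^ (k-1))) (t := Ioo (-r) r) (y₀ := 0) (y := x) hS isOpen_Ioo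
    isPreconnected_Ioo (fun k y _ => (hasDerivAt_pow k y).const_mul (u k)) ?_ (by simp [hr0])
    (hasSum_poly u C p hu 0 (by simp)).summable (abs_lt.1 hxr)
  · convert! h using 1
    have hS' : Summable (fun (k:ℕ) => u k * ((k:ℝ) * x ^ (k-1))) := by
      refine Summable.of_norm_bounded hS fun k => ?_
      simp only [norm_mul, norm_pow, Real.norm_eq_abs, Nat.abs_cast]
      gcongr
    rw [hS'.tsum_eq_zero_add]
    simp only [Nat.cast_zero, zero_mul, mul_zero, zero_add, add_tsub_cancel_right]
    congr 1; ext k; push_cast; ring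
  · intro k y hy
    simp only [norm_mul, norm_pow, Real.norm_eq_abs, Nat.abs_cast]
    have := (hmem y hy).le
    gcongr

theorem beta_int (α β : ℝ) (hα : 0 < α) (hβ : 0 < β) :
    IntegrableOn (fun t : ℝ => t ^ (α - 1) * (1 - t) ^ (β - 1)) (Ioo 0 1) ∧
    ∫ t in Ioo (0:ℝ) 1, t ^ (α - 1) * (1 - t) ^ (β - 1) =
      Real.Gamma α * Real.Gamma β / Real.Gamma (α + β) := by
  have hc := Complex.betaIntegral_convergent (u := α) (v := β) (by simpa) (by simpa)
  rw [intervalIntegrable_iff_integrableOn_Ioo_of_le zero_le_one] at hc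
  have he : EqOn (fun t : ℝ => ((t:ℂ) ^ ((α:ℂ) - 1) * (1 - (t:ℂ)) ^ ((β:ℂ) - 1)))
     (fun t : ℝ => ((t ^ (α - 1) * (1 - t) ^ (β - 1) : ℝ) : ℂ)) (Ioo 0 1) := by
    intro t ht
    simp only
    rw [Complex.ofReal_mul, Complex.ofReal_cpow ht.1.le, Complex.ofReal_cpow (by linarith [ht.2])]
    push_cast; rfl
  have hi := (integrableOn_congr_fun he measurableSet_Ioo).1 hc
  have hi' : IntegrableOn (fun t : ℝ => t ^ (α - 1) * (1 - t) ^ (β - 1)) (Ioo 0 1) := by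
    have := hi.re
    simpa using! this
  refine ⟨hi', ?_⟩
  have h := ProbabilityTheory.beta_eq_betaIntegralReal α β hα hβ
  rw [Complex.betaIntegral, intervalIntegral.integral_of_le zero_le_one, integral_Ioc_eq_integral_Ioo,
    setIntegral_congr_fun measurableSet_Ioo he, integral_complex_ofReal, Complex.ofReal_re] at h
  rw [← h]; rfl

/-- Coefficients of the hypergeometric series with equal upper parameters. -/
noncomputable def hcoef (a c : ℝ) (k : ℕ) : ℝ :=
  (ascPochhammer ℝ k).eval a * (ascPochhammer ℝ k).eval a / (ascPochhammer ℝ k).eval c /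
    (k.factorial : ℝ)

theorem hcoef_pos (a c : ℝ) (ha : 0 < a) (hc : 0 < c) (k : ℕ) : 0 < hcoef a c k := by
  have h1 := ascPochhammer_pos k a ha
  have h2 := ascPochhammer_pos k c hc
  unfold hcoef; positivity

theorem hcoef_succ (a c : ℝ) (hc : 0 < c) (k : ℕ) :
    ((k:ℝ)+1) * (c + k) * hcoef a c (k+1) = (a + k)^2 * hcoef a c k := by
  have h2 := ascPochhammer_pos k c hc
  have h3 : 0 < c + k := by positivity
  unfold hcoef
  rw [ascPochhammer_succ_eval, ascPochhammer_succ_eval, Nat.factorial_succ]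
  push_cast
  field_simp

theorem hyp_eq (a c z : ℝ) : (∑' s : ℕ, ((ascPochhammer ℝ s).eval a * (ascPochhammer ℝ s).eval a /
    (ascPochhammer ℝ s).eval c) * z ^ s / (Nat.factorial s : ℝ)) = ∑' k, hcoef a c k * z ^ k := by
  congr 1; ext k; unfold hcoef; ring

theorem hcoef_asymp (a c σ : ℝ) (ha : 0 < a) (hc : 0 < c) (h : c = 2 * a + σ) :
    Tendsto (fun k : ℕ => ((k:ℝ)+1) * hcoef a c (k+1) * (k:ℝ)^σ) atTop
      (𝓝 (Real.Gamma c / Real.Gamma a ^ 2)) := by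
  have h1 := ((poch_asymp a ha).pow 2).div (poch_asymp c hc)
    (by have := Real.Gamma_pos_of_pos hc; positivity)
  have e : (1 / Real.Gamma a) ^ 2 / (1 / Real.Gamma c) = Real.Gamma c / Real.Gamma a ^ 2 := by
    field_simp
  rw [e] at h1
  refine h1.congr' ?_
  filter_upwards [eventually_gt_atTop 0] with k hk
  have hk' : (0:ℝ) < k := by exact_mod_cast hk
  have h2 := ascPochhammer_pos (k+1) c hc
  have e2 : (k:ℝ)^c = (k:ℝ)^a * (k:ℝ)^a * (k:ℝ)^σ := by
    rw [← Real.rpow_add hk', ← Real.rpow_add hk', h]; congr 1; ring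
  have h4 := Real.rpow_pos_of_pos hk' a
  have h5 := Real.rpow_pos_of_pos hk' σ
  simp only [Pi.div_apply]
  rw [e2]
  unfold hcoef
  rw [Nat.factorial_succ]
  push_cast
  field_simp

theorem hcoef_summable (a c σ : ℝ) (ha : 0 < a) (hc : 0 < c) (hσ : 0 < σ) (h : c = 2 * a + σ) :
    Summable (hcoef a c) := by
  rw [← summable_nat_add_iff 1]
  set W := Real.Gamma c / Real.Gamma a ^ 2
  have h1 := (hcoef_asymp a c σ ha hc h).eventually_lt_const (lt_add_one W)
  refine summable_of_isBigO_nat (g := fun k : ℕ => (k:ℝ)^(-(1+σ)))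
    (Real.summable_nat_rpow.2 (by linarith)) ?_
  refine Asymptotics.IsBigO.of_bound (W+1) ?_
  filter_upwards [h1, eventually_gt_atTop 0] with k hk1 hk
  have hk' : (0:ℝ) < k := by exact_mod_cast hk
  have hp := hcoef_pos a c ha hc (k+1)
  have h5 := Real.rpow_pos_of_pos hk' σ
  have h6 := Real.rpow_pos_of_pos hk' (-(1+σ))
  rw [Real.norm_of_nonneg hp.le, Real.norm_of_nonneg h6.le, Real.rpow_neg hk'.le,
    Real.rpow_add hk', Real.rpow_one, ← div_eq_mul_inv, le_div_iff₀ (by positivity)]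
  have : k * hcoef a c (k+1) * (k:ℝ)^σ ≤ ((k:ℝ)+1) * hcoef a c (k+1) * (k:ℝ)^σ := by
    gcongr; linarith
  linarith

theorem Gamma_add_poch (x : ℝ) (hx : 0 < x) (k : ℕ) :
    Real.Gamma (x + k) = (ascPochhammer ℝ k).eval x * Real.Gamma x := by
  induction k with
  | zero => simp
  | succ k ih =>
    rw [ascPochhammer_succ_eval]
    push_cast
    rw [← add_assoc, Real.Gamma_add_one (by positivity), ih]; ring

theorem gauss_sum (a c σ : ℝ) (ha : 0 < a) (hc : 0 < c) (hσ : 0 < σ) (h : c = 2 * a + σ) :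
    ∑' k, hcoef a c k = Real.Gamma c * Real.Gamma σ / Real.Gamma (a + σ) ^ 2 := by
  have hca : 0 < a + σ := by linarith
  set K := Real.Gamma a * Real.Gamma (a + σ) / Real.Gamma c with hK
  have g1 := Real.Gamma_pos_of_pos ha
  have g2 := Real.Gamma_pos_of_pos hc
  have g3 := Real.Gamma_pos_of_pos hca
  have hK0 : 0 < K := by positivity
  have hval : ∀ k : ℕ, ∫ t in Ioo (0:ℝ) 1, (ascPochhammer ℝ k).eval a / (k.factorial : ℝ) *
      (t ^ ((a + k) - 1) * (1 - t) ^ ((a + σ) - 1)) = hcoef a c k * K := by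
    intro k
    rw [integral_const_mul, (beta_int (a+k) (a+σ) (by positivity) hca).2,
      show a + k + (a + σ) = c + k by rw [h]; ring, Gamma_add_poch a ha, Gamma_add_poch c hc, hK]
    have h2 := ascPochhammer_pos k c hc
    unfold hcoef
    field_simp
  have hnn : ∀ k : ℕ, ∀ t ∈ Ioo (0:ℝ) 1, 0 ≤ (ascPochhammer ℝ k).eval a / (k.factorial : ℝ) *
      (t ^ ((a + k) - 1) * (1 - t) ^ ((a + σ) - 1)) := by
    intro k t ht
    have h1 := ascPochhammer_pos k a ha
    have := Real.rpow_nonneg ht.1.le (a + k - 1)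
    have := Real.rpow_nonneg (sub_nonneg.2 ht.2.le) (a + σ - 1)
    positivity
  have hs := hasSum_integral_of_summable_integral_norm (μ := volume.restrict (Ioo (0:ℝ) 1))
    (F := fun (k:ℕ) t => (ascPochhammer ℝ k).eval a / (k.factorial : ℝ) *
      (t ^ ((a + k) - 1) * (1 - t) ^ ((a + σ) - 1)))
    (fun k => (beta_int (a+k) (a+σ) (by positivity) hca).1.const_mul _) (by
      refine ((hcoef_summable a c σ ha hc hσ h).mul_right K).congr fun k => ?_
      rw [← hval]
      exact setIntegral_congr_fun measurableSet_Ioo fun t ht =>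
        (Real.norm_of_nonneg (hnn k t ht)).symm)
  simp only [hval] at hs
  have hint : ∫ t in Ioo (0:ℝ) 1, (∑' k : ℕ, (ascPochhammer ℝ k).eval a / (k.factorial : ℝ) *
      (t ^ ((a + k) - 1) * (1 - t) ^ ((a + σ) - 1))) =
      Real.Gamma a * Real.Gamma σ / Real.Gamma (a + σ) := by
    rw [← (beta_int a σ ha hσ).2]
    refine setIntegral_congr_fun measurableSet_Ioo fun t ht => ?_
    have ht1 : 0 < 1 - t := sub_pos.2 ht.2
    have hb := (hasSum_binom a t (by rw [abs_of_pos ht.1]; exact ht.2)).mul_right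
      (t ^ (a - 1) * (1 - t) ^ (a + σ - 1))
    have e : 1 / (1 - t) ^ a * (t ^ (a - 1) * (1 - t) ^ (a + σ - 1)) =
        t ^ (a - 1) * (1 - t) ^ (σ - 1) := by
      rw [show a + σ - 1 = a + (σ - 1) by ring, Real.rpow_add ht1]
      have := Real.rpow_pos_of_pos ht1 a
      field_simp
    rw [e] at hb
    rw [← hb.tsum_eq]
    congr 1; ext k
    rw [show a + (k:ℝ) - 1 = (a - 1) + k by ring, Real.rpow_add ht.1, Real.rpow_natCast]
    ring
  rw [hint] at hs
  have := hs.tsum_eq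
  rw [tsum_mul_right] at this
  rw [eq_div_of_mul_eq hK0.ne' this, hK]
  field_simp

theorem hyp_tendsto_one (a c σ : ℝ) (ha : 0 < a) (hc : 0 < c) (hσ : 0 < σ) (h : c = 2 * a + σ) :
    Tendsto (fun s : ℝ => ∑' k, hcoef a c k * s ^ k) (𝓝[<] 1)
      (𝓝 (Real.Gamma c * Real.Gamma σ / Real.Gamma (a + σ) ^ 2)) := by
  have hcont : ContinuousOn (fun s : ℝ => ∑' k, hcoef a c k * s ^ k) (Icc 0 1) := by
    refine continuousOn_tsum (fun k => by fun_prop) (hcoef_summable a c σ ha hc hσ h) ?_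
    intro k s hs
    have hp := hcoef_pos a c ha hc k
    rw [Real.norm_of_nonneg (mul_nonneg hp.le (pow_nonneg hs.1 k))]
    exact mul_le_of_le_one_right hp.le (pow_le_one₀ hs.1 hs.2)
  have h1 := (hcont 1 (by simp)).tendsto
  simp only [one_pow, mul_one] at h1
  rw [gauss_sum a c σ ha hc hσ h] at h1
  refine h1.mono_left ?_
  rw [← nhdsWithin_Ioo_eq_nhdsLT (zero_lt_one' ℝ)]
  exact nhdsWithin_mono _ Ioo_subset_Icc_self

theorem hcoef_bdd (a c σ : ℝ) (ha : 0 < a) (hc : 0 < c) (hσ : 0 < σ) (h : c = 2 * a + σ) :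
    ∃ C, ∀ k : ℕ, |hcoef a c k| ≤ C * ((k:ℝ)+1)^0 := by
  refine ⟨∑' k, hcoef a c k, fun k => ?_⟩
  rw [abs_of_pos (hcoef_pos a c ha hc k), pow_zero, mul_one]
  exact (hcoef_summable a c σ ha hc hσ h).le_tsum k fun j _ => (hcoef_pos a c ha hc j).le

theorem hyp'_tendsto_one (a c σ : ℝ) (ha : 0 < a) (hc : 0 < c) (hσ : 0 < σ) (hσ1 : σ < 1)
    (h : c = 2 * a + σ) :
    Tendsto (fun s : ℝ => (1 - s)^(1-σ) * ∑' k : ℕ, (((k:ℝ)+1) * hcoef a c (k+1)) * s ^ k) (𝓝[<] 1)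
      (𝓝 (Real.Gamma c * Real.Gamma (1 - σ) / Real.Gamma a ^ 2)) := by
  obtain ⟨C, hC⟩ := hcoef_bdd a c σ ha hc hσ h
  have hτ : 0 < 1 - σ := by linarith
  have hz : Tendsto (fun s : ℝ => (1 - s)^(1-σ)) (𝓝[<] 1) (𝓝[>] 0) := by
    refine tendsto_nhdsWithin_iff.2 ⟨?_, ?_⟩
    · have hcn : ContinuousAt (fun s : ℝ => (1 - s)^(1-σ)) 1 := by
        refine ContinuousAt.rpow_const (by fun_prop) (Or.inr hτ.le)
      have := hcn.tendsto.mono_left (nhdsWithin_le_nhds (s := Iio 1))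
      simpa [Real.zero_rpow hτ.ne'] using this
    · filter_upwards [self_mem_nhdsWithin] with s hs
      exact Real.rpow_pos_of_pos (sub_pos.2 hs) _
  have key := abel_ratio (fun k : ℕ => ((k:ℝ)+1) * hcoef a c (k+1))
    (fun k => (ascPochhammer ℝ k).eval (1-σ) / (k.factorial : ℝ))
    (Real.Gamma c * Real.Gamma (1 - σ) / Real.Gamma a ^ 2)
    (fun s => ∑' k : ℕ, (((k:ℝ)+1) * hcoef a c (k+1)) * s ^ k) (fun s => 1 / (1 - s) ^ (1-σ))
    (fun k => by have := ascPochhammer_pos k _ hτ; positivity) ?_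
    (fun s hs => hasSum_poly _ _ _ (poly_deriv_bound _ C 0 hC) s
      (by rw [abs_of_pos hs.1]; exact hs.2))
    (fun s hs => hasSum_binom _ s (by rw [abs_of_pos hs.1]; exact hs.2))
    (by simpa using! hz.inv_tendsto_nhdsGT_zero)
  · refine key.congr fun s => ?_
    simp [mul_comm]
  · have g3 := Real.Gamma_pos_of_pos hτ
    have h1 := (hcoef_asymp a c σ ha hc h).div (poch_asymp (1-σ) hτ) (by positivity)
    have h2 : Tendsto (fun k : ℕ => 1 + (1 - σ) / (k:ℝ)) atTop (𝓝 (1 + 0)) :=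
      tendsto_const_nhds.add (tendsto_const_nhds.div_atTop tendsto_natCast_atTop_atTop)
    have h3 := h1.mul h2
    have e : Real.Gamma c / Real.Gamma a ^ 2 / (1 / Real.Gamma (1 - σ)) * (1 + 0) =
      Real.Gamma c * Real.Gamma (1 - σ) / Real.Gamma a ^ 2 := by field_simp; ring
    rw [e] at h3
    refine h3.congr' ?_
    filter_upwards [eventually_gt_atTop 0] with k hk
    have hk' : (0:ℝ) < k := by exact_mod_cast hk
    have h2 := ascPochhammer_pos k _ hτ
    have e2 : (k:ℝ)^(1-σ) = k / (k:ℝ)^σ := by rw [Real.rpow_sub hk', Real.rpow_one]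
    have h5 := Real.rpow_pos_of_pos hk' σ
    have h6 : 0 < 1 - σ + k := by positivity
    simp only [Pi.div_apply]
    rw [e2, ascPochhammer_succ_eval]
    field_simp
    ring

theorem hyp_ode (a c σ : ℝ) (ha : 0 < a) (hc : 0 < c) (hσ : 0 < σ) (h : c = 2 * a + σ)
    (s : ℝ) (hs : |s| < 1) :
    s * (1 - s) * (∑' k : ℕ, (((k:ℝ)+1) * ((((k+1 : ℕ):ℝ)+1) * hcoef a c (k+1+1))) * s ^ k) +
     (c - (2 * a + 1) * s) * (∑' k : ℕ, (((k:ℝ)+1) * hcoef a c (k+1)) * s ^ k) =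
     a^2 * ∑' k : ℕ, hcoef a c k * s ^ k := by
  obtain ⟨C, hC⟩ := hcoef_bdd a c σ ha hc hσ h
  have b1 := poly_deriv_bound _ C 0 hC
  have b2 := poly_deriv_bound _ _ _ b1
  have s0 := hasSum_poly _ _ _ hC s hs
  have s1 := hasSum_poly _ _ _ b1 s hs
  have s2 := hasSum_poly _ _ _ b2 s hs
  simp only [← mul_assoc] at s2 ⊢
  set F0 := ∑' k : ℕ, hcoef a c k * s ^ k
  set F1 := ∑' k : ℕ, ((k:ℝ)+1) * hcoef a c (k+1) * s ^ k
  set F2 := ∑' k : ℕ, ((k:ℝ)+1) * (((k+1 : ℕ):ℝ)+1) * hcoef a c (k+1+1) * s ^ k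
  -- shifted series
  have t1 : HasSum (fun k : ℕ => (k:ℝ) * hcoef a c k * s ^ k) (s * F1) := by
    rw [← hasSum_nat_add_iff' 1, Finset.sum_range_one]
    simp only [Nat.cast_zero, zero_mul, mul_zero, sub_zero]
    convert! s1.mul_left s using 2 with k
    push_cast; ring
  have t2 : HasSum (fun k : ℕ => (k:ℝ) * ((k:ℝ)+1) * hcoef a c (k+1) * s ^ k) (s * F2) := by
    rw [← hasSum_nat_add_iff' 1, Finset.sum_range_one]
    simp only [Nat.cast_zero, zero_mul, mul_zero, sub_zero]
    convert! s2.mul_left s using 2 with k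
    push_cast; ring
  have t3 : HasSum (fun k : ℕ => ((k:ℝ)-1) * (k:ℝ) * hcoef a c k * s ^ k) (s * (s * F2)) := by
    rw [← hasSum_nat_add_iff' 1, Finset.sum_range_one]
    simp only [Nat.cast_zero, zero_mul, mul_zero, sub_zero]
    convert! t2.mul_left s using 2 with k
    push_cast; ring
  have tot := ((t2.sub t3).add (s1.mul_left c)).sub (t1.mul_left (2*a+1))
  have tot2 := s0.mul_left (a^2)
  have heq : ∀ k : ℕ, (k:ℝ) * ((k:ℝ)+1) * hcoef a c (k+1) * s ^ k -
      ((k:ℝ)-1) * (k:ℝ) * hcoef a c k * s ^ k + c * (((k:ℝ)+1) * hcoef a c (k+1) * s ^ k) -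
      (2*a+1) * ((k:ℝ) * hcoef a c k * s ^ k) = a^2 * (hcoef a c k * s ^ k) := by
    intro k
    have := hcoef_succ a c hc k
    linear_combination s ^ k * this
  simp only [heq] at tot
  have := tot.unique tot2
  linear_combination this

theorem integral_of_nonneg_deriv (G g : ℝ → ℝ) (l0 l1 : ℝ)
    (hd : ∀ x ∈ Ioo (0:ℝ) 1, HasDerivAt G (g x) x) (hg : ∀ x ∈ Ioo (0:ℝ) 1, 0 ≤ g x)
    (h0 : Tendsto G (𝓝[>] 0) (𝓝 l0)) (h1 : Tendsto G (𝓝[<] 1) (𝓝 l1)) :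
    ∫ x in Ioo (0:ℝ) 1, g x = l1 - l0 := by
  have hc : ContinuousOn G (Ioo 0 1) := fun x hx => (hd x hx).continuousAt.continuousWithinAt
  have hc' := continuousOn_Icc_extendFrom_Ioo hc h0 h1
  have hint : IntegrableOn g (Ioc 0 1) := by
    refine intervalIntegral.integrableOn_deriv_of_nonneg hc' (fun x hx => ?_) hg
    refine (hd x hx).congr_of_eventuallyEq ?_
    filter_upwards [Ioo_mem_nhds hx.1 hx.2] with y hy
    exact extendFrom_extends hc y hy
  rw [← integral_Ioc_eq_integral_Ioo, ← intervalIntegral.integral_of_le zero_le_one]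
  exact intervalIntegral.integral_eq_sub_of_hasDerivAt_of_tendsto zero_lt_one hd
    ((intervalIntegrable_iff_integrableOn_Ioc_of_le zero_le_one).2 hint) h0 h1

theorem main_aux (a c σ : ℝ) (ha : 0 < a) (hc : 0 < c) (hσ : 0 < σ) (hσ1 : σ < 1)
    (h : c = 2 * a + σ) (F : ℝ → ℝ) (hF : F = fun s => ∑' k, hcoef a c k * s ^ k) :
    ∫ s in Ioo (0 : ℝ) 1, s ^ (c - 1) * (1 - s) ^ (-σ) *
        (s * (1 - s) * (deriv F s) ^ 2 + a ^ 2 * (F s) ^ 2) =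
      (Real.Gamma c * Real.Gamma (1 - σ) / Real.Gamma a ^ 2) *
        (Real.Gamma c * Real.Gamma σ / Real.Gamma (a + σ) ^ 2) := by
  obtain ⟨C, hC⟩ := hcoef_bdd a c σ ha hc hσ h
  have b1 := poly_deriv_bound _ C 0 hC
  set F1 : ℝ → ℝ := fun s => ∑' k : ℕ, (((k:ℝ)+1) * hcoef a c (k+1)) * s ^ k with hF1
  set F2 : ℝ → ℝ := fun s => ∑' k : ℕ, (((k:ℝ)+1) * ((((k+1 : ℕ):ℝ)+1) * hcoef a c (k+1+1))) * s ^ k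
    with hF2
  have d0 : ∀ s, |s| < 1 → HasDerivAt F (F1 s) s := fun s hs => by
    rw [hF]; exact hasDerivAt_poly _ C 0 hC s hs
  have d1 : ∀ s, |s| < 1 → HasDerivAt F1 (F2 s) s := fun s hs =>
    hasDerivAt_poly _ _ _ b1 s hs
  have ode : ∀ s, |s| < 1 → s * (1 - s) * F2 s + (c - (2 * a + 1) * s) * F1 s = a ^ 2 * F s :=
    fun s hs => by rw [hF]; exact hyp_ode a c σ ha hc hσ h s hs
  have habs : ∀ s ∈ Ioo (0:ℝ) 1, |s| < 1 := fun s hs => by rw [abs_of_pos hs.1]; exact hs.2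
  have := integral_of_nonneg_deriv (fun s => s ^ c * (((1 - s) ^ (1 - σ) * F1 s) * F s))
    (fun s => s ^ (c - 1) * (1 - s) ^ (-σ) * (s * (1 - s) * (deriv F s) ^ 2 + a ^ 2 * (F s) ^ 2))
    0 ((Real.Gamma c * Real.Gamma (1 - σ) / Real.Gamma a ^ 2) *
        (Real.Gamma c * Real.Gamma σ / Real.Gamma (a + σ) ^ 2)) ?_ ?_ ?_ ?_
  · rw [this, sub_zero]
  · intro s hs
    have hs1 : 0 < 1 - s := sub_pos.2 hs.2
    have p1 : HasDerivAt (fun s : ℝ => s ^ c) (c * s ^ (c - 1)) s :=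
      Real.hasDerivAt_rpow_const (Or.inl hs.1.ne')
    have p2 : HasDerivAt (fun s : ℝ => (1 - s) ^ (1 - σ))
        ((-1) * (1 - σ) * (1 - s) ^ (1 - σ - 1)) s :=
      ((hasDerivAt_id s).const_sub 1).rpow_const (Or.inl hs1.ne')
    have := p1.mul ((p2.mul (d1 s (habs s hs))).mul (d0 s (habs s hs)))
    convert! this using 1
    simp only [Pi.mul_apply]
    rw [(d0 s (habs s hs)).deriv, show 1 - σ - 1 = -σ by ring]
    have e1 : s ^ c = s ^ (c - 1) * s := by
      rw [Real.rpow_sub_one hs.1.ne']; field_simp [hs.1.ne']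
    have e2 : (1 - s) ^ (1 - σ) = (1 - s) ^ (-σ) * (1 - s) := by
      rw [show 1 - σ = -σ + 1 by ring, Real.rpow_add_one hs1.ne']
    rw [e1, e2]
    have o := ode s (habs s hs)
    have hσ' : σ = c - 2 * a := by linarith
    generalize s ^ (c - 1) = X
    generalize (1 - s) ^ (-σ) = Y
    rw [hσ']
    linear_combination (-(X * Y * F s)) * o
  · intro s hs
    have hs1 : 0 < 1 - s := sub_pos.2 hs.2
    have := hs.1
    positivity
  · have c1 : ContinuousAt (fun s : ℝ => s ^ c) 0 := Real.continuousAt_rpow_const _ _ (Or.inr hc.le)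
    have c2 : ContinuousAt (fun s : ℝ => (1 - s) ^ (1 - σ)) 0 :=
      ContinuousAt.rpow_const (by fun_prop) (Or.inl (by norm_num))
    have c3 := (d1 0 (by simp)).continuousAt
    have c4 := (d0 0 (by simp)).continuousAt
    have := (c1.mul ((c2.mul c3).mul c4)).tendsto.mono_left (nhdsWithin_le_nhds (s := Ioi 0))
    simpa [Real.zero_rpow hc.ne'] using! this
  · have c1 : ContinuousAt (fun s : ℝ => s ^ c) 1 := Real.continuousAt_rpow_const _ _ (Or.inr hc.le)
    have t1 := c1.tendsto.mono_left (nhdsWithin_le_nhds (s := Iio 1))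
    rw [Real.one_rpow] at t1
    have t2 := hyp'_tendsto_one a c σ ha hc hσ hσ1 h
    have t3 := hyp_tendsto_one a c σ ha hc hσ h
    rw [← hF] at t3
    simpa using t1.mul (t2.mul t3)

/-- Value of the Pohozaev-type integral. -/
theorem stmt11 (n : ℕ) (hn : 2 ≤ n) (σ : ℝ) (hσ : 0 < σ) (hσ1 : σ < 1) :
    ∫ s in Set.Ioo (0 : ℝ) 1, s ^ ((n : ℝ) / 2 - 1) * (1 - s) ^ (-σ) *
        (s * (1 - s) *
            (deriv (hyp2F1 (((n : ℝ) - 2 * σ) / 4) (((n : ℝ) - 2 * σ) / 4) ((n : ℝ) / 2)) s) ^ 2 +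
          (((n : ℝ) - 2 * σ) / 4) ^ 2 *
            (hyp2F1 (((n : ℝ) - 2 * σ) / 4) (((n : ℝ) - 2 * σ) / 4) ((n : ℝ) / 2) s) ^ 2) =
      Real.Gamma ((n : ℝ) / 2) ^ 2 * Real.Gamma σ * Real.Gamma (1 - σ) /
        (Real.Gamma (((n : ℝ) - 2 * σ) / 4) ^ 2 * Real.Gamma (((n : ℝ) + 2 * σ) / 4) ^ 2) := by
  have hn' : (2:ℝ) ≤ n := by exact_mod_cast hn
  rw [main_aux (((n : ℝ) - 2 * σ) / 4) ((n : ℝ) / 2) σ (by linarith) (by linarith) hσ hσ1 (by ring)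
    (hyp2F1 (((n : ℝ) - 2 * σ) / 4) (((n : ℝ) - 2 * σ) / 4) ((n : ℝ) / 2))
    (funext fun z => hyp_eq _ _ z), show ((n : ℝ) - 2 * σ) / 4 + σ = ((n : ℝ) + 2 * σ) / 4 by ring,
    div_mul_div_comm]
  congr 1
  ring
end

section
/- Let n ≥ 2, 0 < σ < n/2, M₀ > 0, u₀(x) = M₀|x|^{-(n-2σ)/2}, and let P_σ(x,t) = β(n,σ) t^{2σ}/(|x|²+t²)^{(n+2σ)/2} be the Poisson kernel with β(n,σ) = (2/|𝕊^{n-1}|) Γ(n/2 + σ)/(Γ(n/2)Γ(σ)). Then the extension U₀(x,t) = ∫_{ℝⁿ} P_σ(x - y, t) u₀(y) dy satisfies, for all (x,t) ∈ ℝⁿ × (0,∞), U₀(x,t) = (Γ((n+2σ)/4)²/(Γ(n/2)Γ(σ))) · M₀ (|x|² + t²)^{-(n-2σ)/4} ₂F₁( (n-2σ)/4, (n-2σ)/4; n/2; |x|²/(|x|²+t²) ). -/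
section Helpers
open MeasureTheory Set Real

lemma gam (α r : ℝ) (hα : 0 < α) (hr : 0 < r) :
    ∫⁻ s in Ioi (0:ℝ), ENNReal.ofReal (s ^ (α - 1) * exp (-(r * s))) =
      ENNReal.ofReal ((1 / r) ^ α * Gamma α) := by
  have h := Real.integral_rpow_mul_exp_neg_mul_Ioi hα hr
  have hpos : 0 < (1 / r) ^ α * Gamma α := mul_pos (by positivity) (Gamma_pos_of_pos hα)
  rw [← h, ofReal_integral_eq_lintegral_ofReal]
  · by_contra hc
    rw [integral_undef hc] at h
    linarith
  · refine (ae_restrict_mem measurableSet_Ioi).mono fun s hs => ?_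
    have : (0:ℝ) < s := hs
    positivity

lemma gamma_poch (a : ℝ) (ha : 0 < a) (k : ℕ) :
    Gamma (a + k) = Gamma a * (ascPochhammer ℝ k).eval a := by
  induction k with
  | zero => simp
  | succ k ih =>
    rw [ascPochhammer_succ_eval, Nat.cast_succ, ← add_assoc, Gamma_add_one (by positivity), ih]
    ring

lemma bet (α β : ℝ) (hα : 0 < α) (hβ : 0 < β) :
    ∫⁻ w in Ioi (0:ℝ), ENNReal.ofReal (w ^ (α - 1) * (1 + w) ^ (-(α + β))) =
      ENNReal.ofReal (Gamma α * Gamma β / Gamma (α + β)) := by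
  have hG : 0 < Gamma (α + β) := Gamma_pos_of_pos (by positivity)
  have hGa := Gamma_pos_of_pos hα
  have hGb := Gamma_pos_of_pos hβ
  have h1 : ∀ w ∈ Ioi (0:ℝ), ENNReal.ofReal (w ^ (α - 1) * (1 + w) ^ (-(α + β))) =
      ∫⁻ s in Ioi (0:ℝ), ENNReal.ofReal
        (w ^ (α - 1) / Gamma (α + β) * (s ^ (α + β - 1) * exp (-((1 + w) * s)))) := by
    intro w (hw : 0 < w)
    have h0 : 0 ≤ w ^ (α - 1) / Gamma (α + β) := by positivity
    simp_rw [ENNReal.ofReal_mul h0]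
    rw [lintegral_const_mul' _ _ ENNReal.ofReal_ne_top, gam _ _ (by positivity) (by positivity),
      ← ENNReal.ofReal_mul h0]
    congr 1
    rw [one_div, inv_rpow (by positivity), rpow_neg (by positivity)]
    field_simp
  rw [setLIntegral_congr_fun measurableSet_Ioi h1, lintegral_lintegral_swap (by fun_prop)]
  have h2 : ∀ s ∈ Ioi (0:ℝ), ∫⁻ w in Ioi (0:ℝ), ENNReal.ofReal
        (w ^ (α - 1) / Gamma (α + β) * (s ^ (α + β - 1) * exp (-((1 + w) * s)))) =
      ENNReal.ofReal (Gamma α / Gamma (α + β)) * ENNReal.ofReal (s ^ (β - 1) * exp (-(1 * s))) := by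
    intro s (hs : 0 < s)
    have h0 : 0 ≤ s ^ (α + β - 1) * exp (-s) / Gamma (α + β) := by positivity
    have : ∀ w, w ^ (α - 1) / Gamma (α + β) * (s ^ (α + β - 1) * exp (-((1 + w) * s))) =
        s ^ (α + β - 1) * exp (-s) / Gamma (α + β) * (w ^ (α - 1) * exp (-(s * w))) := by
      intro w
      rw [show -((1 + w) * s) = -s + -(s * w) by ring, exp_add]; ring
    simp_rw [this, ENNReal.ofReal_mul h0]
    rw [lintegral_const_mul' _ _ ENNReal.ofReal_ne_top, gam _ _ hα hs,
      ← ENNReal.ofReal_mul h0, ← ENNReal.ofReal_mul (by positivity)]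
    congr 1
    rw [one_div, inv_rpow hs.le, show α + β - 1 = α + (β - 1) by ring, rpow_add hs]
    field_simp
  rw [setLIntegral_congr_fun measurableSet_Ioi h2, lintegral_const_mul' _ _ ENNReal.ofReal_ne_top,
    gam _ _ hβ one_pos, ← ENNReal.ofReal_mul (by positivity)]
  congr 1
  simp; ring

lemma binom (a y : ℝ) (ha : 0 < a) (hy : 0 ≤ y) (hy1 : y < 1) :
    ENNReal.ofReal ((1 - y) ^ (-a)) =
      ∑' k : ℕ, ENNReal.ofReal ((ascPochhammer ℝ k).eval a * y ^ k / k.factorial) := by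
  have hG := Gamma_pos_of_pos ha
  have e : ENNReal.ofReal ((1 - y) ^ (-a)) = ENNReal.ofReal (1 / Gamma a) *
      ∫⁻ s in Ioi (0:ℝ), ENNReal.ofReal (s ^ (a - 1) * exp (-((1 - y) * s))) := by
    rw [gam _ _ ha (by linarith), ← ENNReal.ofReal_mul (by positivity)]
    congr 1
    rw [one_div (1 - y), inv_rpow (by linarith), rpow_neg (by linarith)]
    field_simp
  have h1 : ∀ s ∈ Ioi (0:ℝ), ENNReal.ofReal (s ^ (a - 1) * exp (-((1 - y) * s))) =
      ∑' k : ℕ, ENNReal.ofReal (y ^ k / k.factorial) *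
        ENNReal.ofReal (s ^ (a + k - 1) * exp (-(1 * s))) := by
    intro s (hs : 0 < s)
    have hsum : HasSum (fun k : ℕ => (s * y) ^ k / k.factorial) (exp (s * y)) := by
      rw [Real.exp_eq_exp_ℝ]
      exact NormedSpace.expSeries_div_hasSum_exp (s * y)
    rw [show -((1 - y) * s) = -s + s * y by ring, exp_add, ← mul_assoc,
      ENNReal.ofReal_mul (by positivity), ← hsum.tsum_eq,
      ENNReal.ofReal_tsum_of_nonneg (fun k => by positivity) hsum.summable,
      ← ENNReal.tsum_mul_left]
    congr 1
    funext k
    rw [← ENNReal.ofReal_mul (by positivity), ← ENNReal.ofReal_mul (by positivity)]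
    congr 1
    rw [show a + k - 1 = a - 1 + k by ring, rpow_add hs, rpow_natCast, mul_pow, one_mul]
    ring
  rw [e, setLIntegral_congr_fun measurableSet_Ioi h1, lintegral_tsum (by fun_prop),
    ← ENNReal.tsum_mul_left]
  congr 1
  funext k
  rw [lintegral_const_mul' _ _ ENNReal.ofReal_ne_top, gam _ _ (by positivity) one_pos,
    ← ENNReal.ofReal_mul (by positivity), ← ENNReal.ofReal_mul (by positivity)]
  congr 1
  rw [gamma_poch a ha]
  simp
  field_simp

lemma gauss (n : ℕ) (x : EuclideanSpace ℝ (Fin n)) (s r : ℝ) (hs : 0 < s) (hr : 0 < r) :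
    ∫⁻ y : EuclideanSpace ℝ (Fin n), ENNReal.ofReal (exp (-(s * ‖x - y‖ ^ 2)) * exp (-(‖y‖ ^ 2 * r))) =
      ENNReal.ofReal ((π / (s + r)) ^ ((n : ℝ) / 2) * exp (-(s * r / (s + r) * ‖x‖ ^ 2))) := by
  have h := GaussianFourier.integral_rexp_neg_mul_sq_norm (V := EuclideanSpace ℝ (Fin n)) (b := s + r) (by positivity)
  simp only [finrank_euclideanSpace, Fintype.card_fin] at h
  have hpos : 0 < (π / (s + r)) ^ ((n : ℝ) / 2) := by positivity
  have hl : ∫⁻ y : EuclideanSpace ℝ (Fin n), ENNReal.ofReal (exp (-(s + r) * ‖y‖ ^ 2)) =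
      ENNReal.ofReal ((π / (s + r)) ^ ((n : ℝ) / 2)) := by
    rw [← h, ofReal_integral_eq_lintegral_ofReal]
    · by_contra hc
      rw [integral_undef hc] at h
      linarith
    · exact Filter.Eventually.of_forall fun y => (exp_pos _).le
  rw [← lintegral_sub_right_eq_self _ ((s / (s + r)) • x)] at hl
  rw [ENNReal.ofReal_mul (by positivity), ← hl, ← lintegral_mul_const' _ _ ENNReal.ofReal_ne_top]
  congr 1
  funext y
  rw [← ENNReal.ofReal_mul (by positivity), ← exp_add, ← exp_add]
  congr 2
  rw [@norm_sub_sq_real _ _ _ x y, @norm_sub_sq_real _ _ _ y, norm_smul, inner_smul_right, mul_pow, real_inner_comm,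
    norm_eq_abs, sq_abs]
  field_simp
  ring

lemma scale (k : ℝ) (hk : 0 < k) (f : ℝ → ENNReal) :
    ∫⁻ r in Ioi (0:ℝ), f r = ∫⁻ w in Ioi (0:ℝ), ENNReal.ofReal k * f (k * w) := by
  have h := lintegral_image_eq_lintegral_abs_deriv_mul (s := Ioi (0:ℝ)) measurableSet_Ioi
    (f := fun w => k * w) (f' := fun _ => k) (fun x _ => by
      simpa using ((hasDerivAt_id x).const_mul k).hasDerivWithinAt)
    (mul_right_injective₀ hk.ne').injOn f
  rw [abs_of_pos hk] at h
  rw [← h]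
  congr 2
  rw [image_mul_left_Ioi hk, mul_zero]

lemma Jint (a b d : ℝ) (ha : 0 < a) (hb : 0 < b) (hd : 0 < d) (hd1 : d ≤ 1) :
    ∫⁻ w in Ioi (0:ℝ), ENNReal.ofReal (w ^ (a - 1) * (1 + d * w) ^ (-a) * (1 + w) ^ (-b)) =
      ∑' k : ℕ, ENNReal.ofReal ((ascPochhammer ℝ k).eval a * (1 - d) ^ k / k.factorial *
        (Gamma (a + k) * Gamma b / Gamma (a + k + b))) := by
  have hp : ∀ k : ℕ, 0 ≤ (ascPochhammer ℝ k).eval a * (1 - d) ^ k / k.factorial := by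
    intro k
    have := ascPochhammer_pos k a ha
    have : 0 ≤ 1 - d := by linarith
    positivity
  have h1 : ∀ w ∈ Ioi (0:ℝ),
      ENNReal.ofReal (w ^ (a - 1) * (1 + d * w) ^ (-a) * (1 + w) ^ (-b)) =
      ∑' k : ℕ, ENNReal.ofReal ((ascPochhammer ℝ k).eval a * (1 - d) ^ k / k.factorial) *
        ENNReal.ofReal (w ^ (a + k - 1) * (1 + w) ^ (-(a + k + b))) := by
    intro w (hw : 0 < w)
    have hw1 : 0 < 1 + w := by linarith
    have hd' : 0 ≤ 1 - d := by linarith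
    have hlt : (1 - d) * w / (1 + w) < 1 := by
      rw [div_lt_one hw1]; nlinarith [mul_pos hd hw]
    have e : 1 + d * w = (1 + w) * (1 - (1 - d) * w / (1 + w)) := by field_simp; ring
    rw [e, mul_rpow hw1.le (by linarith),
      show w ^ (a - 1) * ((1 + w) ^ (-a) * (1 - (1 - d) * w / (1 + w)) ^ (-a)) * (1 + w) ^ (-b) =
        (w ^ (a - 1) * (1 + w) ^ (-a) * (1 + w) ^ (-b)) * (1 - (1 - d) * w / (1 + w)) ^ (-a) by ring,
      ENNReal.ofReal_mul (by positivity), binom a _ ha (by positivity) hlt,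
      ← ENNReal.tsum_mul_left]
    congr 1
    funext k
    rw [← ENNReal.ofReal_mul (by positivity), ← ENNReal.ofReal_mul (hp k)]
    congr 1
    rw [show a + k - 1 = a - 1 + k by ring, rpow_add hw, rpow_natCast,
      show -(a + k + b) = -a + -b + -(k:ℝ) by ring, rpow_add hw1, rpow_add hw1, rpow_neg hw1.le k,
      rpow_natCast, div_pow, mul_pow]
    field_simp
  rw [setLIntegral_congr_fun measurableSet_Ioi h1, lintegral_tsum (by fun_prop)]
  congr 1
  funext k
  rw [lintegral_const_mul' _ _ ENNReal.ofReal_ne_top, bet _ _ (by positivity) hb,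
    ← ENNReal.ofReal_mul (hp k)]

lemma step1 (n : ℕ) (hn : 2 ≤ n) (x : EuclideanSpace ℝ (Fin n)) (s a : ℝ) (hs : 0 < s)
    (ha : 0 < a) :
    ENNReal.ofReal (Gamma a) * ∫⁻ y : EuclideanSpace ℝ (Fin n),
      ENNReal.ofReal (exp (-(s * ‖x - y‖ ^ 2)) * ‖y‖ ^ (-(2 * a))) =
    ∫⁻ r in Ioi (0:ℝ), ENNReal.ofReal (r ^ (a - 1) *
      ((π / (s + r)) ^ ((n : ℝ) / 2) * exp (-(s * r / (s + r) * ‖x‖ ^ 2)))) := by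
  have : Nonempty (Fin n) := ⟨⟨0, by omega⟩⟩
  have : Nontrivial (EuclideanSpace ℝ (Fin n)) := inferInstance
  have hG := Gamma_pos_of_pos ha
  rw [← lintegral_const_mul' _ _ ENNReal.ofReal_ne_top]
  have h1 : ∀ᵐ y : EuclideanSpace ℝ (Fin n), ENNReal.ofReal (Gamma a) *
      ENNReal.ofReal (exp (-(s * ‖x - y‖ ^ 2)) * ‖y‖ ^ (-(2 * a))) =
      ∫⁻ r in Ioi (0:ℝ), ENNReal.ofReal
        (exp (-(s * ‖x - y‖ ^ 2)) * (r ^ (a - 1) * exp (-(‖y‖ ^ 2 * r)))) := by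
    filter_upwards [Measure.ae_ne volume (0 : EuclideanSpace ℝ (Fin n))] with y hy
    have hy' : 0 < ‖y‖ := norm_pos_iff.2 hy
    simp_rw [ENNReal.ofReal_mul (exp_pos (-(s * ‖x - y‖ ^ 2))).le]
    rw [lintegral_const_mul' _ _ ENNReal.ofReal_ne_top, gam _ _ ha (by positivity),
      ← ENNReal.ofReal_mul (by positivity), ← ENNReal.ofReal_mul (by positivity),
      ← ENNReal.ofReal_mul (by positivity)]
    congr 1
    rw [one_div, inv_rpow (by positivity), rpow_neg (by positivity), rpow_mul (by positivity)]
    norm_num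
    ring
  rw [lintegral_congr_ae h1, lintegral_lintegral_swap (by fun_prop)]
  refine setLIntegral_congr_fun measurableSet_Ioi fun r (hr : 0 < r) => ?_
  rw [ENNReal.ofReal_mul (by positivity), ← gauss n x s r hs hr,
    ← lintegral_const_mul' _ _ ENNReal.ofReal_ne_top]
  congr 1
  funext y
  rw [← ENNReal.ofReal_mul (by positivity)]
  congr 1
  ring

lemma step2 (n : ℕ) (x : EuclideanSpace ℝ (Fin n)) (p T a : ℝ) (hp : 0 < p) (hT : 0 < T) :
    ENNReal.ofReal (Gamma p) * ∫⁻ y : EuclideanSpace ℝ (Fin n),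
      ENNReal.ofReal ((‖x - y‖ ^ 2 + T) ^ (-p) * ‖y‖ ^ (-(2 * a))) =
    ∫⁻ s in Ioi (0:ℝ), ENNReal.ofReal (s ^ (p - 1) * exp (-(T * s))) *
      ∫⁻ y : EuclideanSpace ℝ (Fin n),
        ENNReal.ofReal (exp (-(s * ‖x - y‖ ^ 2)) * ‖y‖ ^ (-(2 * a))) := by
  have hG := Gamma_pos_of_pos hp
  have h1 : ∀ y : EuclideanSpace ℝ (Fin n), ENNReal.ofReal (Gamma p) *
      ENNReal.ofReal ((‖x - y‖ ^ 2 + T) ^ (-p) * ‖y‖ ^ (-(2 * a))) =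
      ∫⁻ s in Ioi (0:ℝ), ENNReal.ofReal (‖y‖ ^ (-(2 * a)) *
        (s ^ (p - 1) * exp (-((‖x - y‖ ^ 2 + T) * s)))) := by
    intro y
    have h0 : 0 ≤ ‖y‖ ^ (-(2 * a)) := by positivity
    simp_rw [ENNReal.ofReal_mul h0]
    rw [lintegral_const_mul' _ _ ENNReal.ofReal_ne_top, gam _ _ hp (by positivity),
      ← ENNReal.ofReal_mul (by positivity), ← ENNReal.ofReal_mul (by positivity)]
    congr 1
    rw [one_div, inv_rpow (by positivity), rpow_neg (by positivity)]
    ring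
  rw [← lintegral_const_mul' _ _ ENNReal.ofReal_ne_top]
  simp_rw [h1]
  rw [lintegral_lintegral_swap (by fun_prop)]
  refine setLIntegral_congr_fun measurableSet_Ioi fun s (hs : 0 < s) => ?_
  rw [← lintegral_const_mul' _ _ ENNReal.ofReal_ne_top]
  congr 1
  funext y
  rw [← ENNReal.ofReal_mul (by positivity)]
  congr 1
  rw [show -((‖x - y‖ ^ 2 + T) * s) = -(T * s) + -(s * ‖x - y‖ ^ 2) by ring, exp_add]
  ring

lemma step3 (n : ℕ) (hn : 2 ≤ n) (x : EuclideanSpace ℝ (Fin n)) (T a b : ℝ) (ha : 0 < a)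
    (hb : 0 < b) (hab : a + b = (n : ℝ) / 2) (hT : 0 < T) :
    ENNReal.ofReal (Gamma a) * (ENNReal.ofReal (Gamma (2 * b)) *
      ∫⁻ y : EuclideanSpace ℝ (Fin n),
      ENNReal.ofReal ((‖x - y‖ ^ 2 + T) ^ (-(2 * b)) * ‖y‖ ^ (-(2 * a)))) =
    ENNReal.ofReal ((T / (‖x‖ ^ 2 + T)) ^ a * T ^ (-b) * π ^ ((n : ℝ) / 2) * Gamma b) *
      ∫⁻ w in Ioi (0:ℝ), ENNReal.ofReal
        (w ^ (a - 1) * (1 + (T / (‖x‖ ^ 2 + T)) * w) ^ (-a) * (1 + w) ^ (-b)) := by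
  have hXT : 0 < ‖x‖ ^ 2 + T := by positivity
  set d := T / (‖x‖ ^ 2 + T) with hd
  have hd0 : 0 < d := by positivity
  have hdX : d * ‖x‖ ^ 2 = T - T * d := by rw [hd]; field_simp; ring
  have hGb := Gamma_pos_of_pos hb
  rw [step2 n x _ T a (by positivity) hT, ← lintegral_const_mul' _ _ ENNReal.ofReal_ne_top]
  have h1 : ∀ s ∈ Ioi (0:ℝ), ENNReal.ofReal (Gamma a) *
      (ENNReal.ofReal (s ^ (2 * b - 1) * exp (-(T * s))) *
      ∫⁻ y : EuclideanSpace ℝ (Fin n),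
        ENNReal.ofReal (exp (-(s * ‖x - y‖ ^ 2)) * ‖y‖ ^ (-(2 * a)))) =
      ∫⁻ w in Ioi (0:ℝ), ENNReal.ofReal
        (d ^ a * π ^ ((n : ℝ) / 2) * w ^ (a - 1) * (1 + d * w) ^ (-((n : ℝ) / 2)) *
          (s ^ (b - 1) * exp (-((T * (1 + w) / (1 + d * w)) * s)))) := by
    intro s (hs : 0 < s)
    rw [mul_left_comm, step1 n hn x s a hs ha, scale (s * d) (by positivity),
      ← lintegral_const_mul' _ _ ENNReal.ofReal_ne_top]
    refine setLIntegral_congr_fun measurableSet_Ioi fun w (hw : 0 < w) => ?_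
    rw [← ENNReal.ofReal_mul (by positivity), ← ENNReal.ofReal_mul (by positivity)]
    congr 1
    have hdw : 0 < 1 + d * w := by positivity
    have e1 : -((T * (1 + w) / (1 + d * w)) * s) =
        -(T * s) + -(s * (s * d * w) / (s + s * d * w) * ‖x‖ ^ 2) := by
      have : s * (s * d * w) / (s + s * d * w) * ‖x‖ ^ 2 =
          s * w * (d * ‖x‖ ^ 2) / (1 + d * w) := by
        rw [show s + s * d * w = s * (1 + d * w) by ring]; field_simp
      rw [this, hdX]; field_simp; ring
    rw [e1, exp_add, show s + s * d * w = s * (1 + d * w) by ring, div_rpow pi_nonneg (by positivity),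
      mul_rpow hs.le hdw.le, mul_rpow (by positivity) hw.le, mul_rpow hs.le hd0.le,
      rpow_neg hdw.le]
    have e2 : s ^ (b - 1) = s ^ (2 * b - 1) * (s * s ^ (a - 1)) / s ^ ((n : ℝ) / 2) := by
      rw [← hab, eq_div_iff (by positivity), ← rpow_one_add' hs.le (by linarith), ← rpow_add hs,
        ← rpow_add hs]
      congr 1; ring
    have e3 : d ^ a = d * d ^ (a - 1) := by
      rw [← rpow_one_add' hd0.le (by linarith)]; congr 1; ring
    rw [e2, e3]
    ring
  rw [setLIntegral_congr_fun measurableSet_Ioi h1, lintegral_lintegral_swap (by fun_prop),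
    ← lintegral_const_mul' _ _ ENNReal.ofReal_ne_top]
  refine setLIntegral_congr_fun measurableSet_Ioi fun w (hw : 0 < w) => ?_
  have hdw : 0 < 1 + d * w := by positivity
  have h0 : 0 ≤ d ^ a * π ^ ((n : ℝ) / 2) * w ^ (a - 1) * (1 + d * w) ^ (-((n : ℝ) / 2)) := by
    positivity
  simp_rw [ENNReal.ofReal_mul h0]
  rw [lintegral_const_mul' _ _ ENNReal.ofReal_ne_top, gam _ _ hb (by positivity),
    ← ENNReal.ofReal_mul h0, ← ENNReal.ofReal_mul (by positivity)]
  congr 1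
  have hw1 : 0 < 1 + w := by positivity
  rw [one_div_div, div_rpow hdw.le (by positivity), mul_rpow hT.le hw1.le, ← hab,
    show -a = -(a + b) + b by ring, rpow_add hdw, rpow_neg hT.le, rpow_neg hw1.le]
  field_simp

lemma step4 (n : ℕ) (hn : 2 ≤ n) (x : EuclideanSpace ℝ (Fin n)) (T a b : ℝ) (ha : 0 < a)
    (hb : 0 < b) (hab : a + b = (n : ℝ) / 2) (hT : 0 < T) :
    Gamma a * (Gamma (2 * b) * ∫ y : EuclideanSpace ℝ (Fin n),
      ((‖x - y‖ ^ 2 + T) ^ (-(2 * b)) * ‖y‖ ^ (-(2 * a)))) =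
    (T / (‖x‖ ^ 2 + T)) ^ a * T ^ (-b) * π ^ ((n : ℝ) / 2) * Gamma b *
      (Gamma a * Gamma b / Gamma ((n : ℝ) / 2) *
        hyp2F1 a a ((n : ℝ) / 2) (‖x‖ ^ 2 / (‖x‖ ^ 2 + T))) := by
  have hXT : 0 < ‖x‖ ^ 2 + T := by positivity
  have hGb := Gamma_pos_of_pos hb
  have hGa := Gamma_pos_of_pos ha
  have hG2b : 0 < Gamma (2 * b) := Gamma_pos_of_pos (by positivity)
  have hc : 0 < (n : ℝ) / 2 := by linarith
  have hGc := Gamma_pos_of_pos hc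
  have h := congrArg ENNReal.toReal (step3 n hn x T a b ha hb hab hT)
  have hd0 : 0 < T / (‖x‖ ^ 2 + T) := by positivity
  have hd1 : T / (‖x‖ ^ 2 + T) ≤ 1 := by
    rw [div_le_one hXT]; nlinarith [sq_nonneg ‖x‖]
  have hz : 1 - T / (‖x‖ ^ 2 + T) = ‖x‖ ^ 2 / (‖x‖ ^ 2 + T) := by field_simp; ring
  rw [Jint a b _ ha hb hd0 hd1, ENNReal.toReal_mul, ENNReal.toReal_mul, ENNReal.toReal_mul,
    ENNReal.tsum_toReal_eq (fun _ => ENNReal.ofReal_ne_top),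
    ENNReal.toReal_ofReal hGa.le, ENNReal.toReal_ofReal hG2b.le,
    ENNReal.toReal_ofReal (by positivity)] at h
  rw [integral_eq_lintegral_of_nonneg_ae (Filter.Eventually.of_forall fun y => by positivity)
    (by fun_prop), h, hyp2F1,
    ← tsum_mul_left (a := Gamma a * Gamma b / Gamma ((n : ℝ) / 2))]
  congr 2
  funext k
  have hpa := ascPochhammer_pos k a ha
  have hpc := ascPochhammer_pos k _ hc
  rw [show a + k + b = (n : ℝ) / 2 + k by rw [← hab]; ring, gamma_poch a ha, gamma_poch _ hc, hz,
    ENNReal.toReal_ofReal (by positivity)]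
  field_simp

end Helpers

/-- Explicit formula for the `σ`-Poisson extension of `u₀(x) = M₀|x|^{-(n-2σ)/2}`
in terms of a hypergeometric function. -/
theorem stmt15 (n : ℕ) (hn : 2 ≤ n) (σ M₀ : ℝ) (hσ : 0 < σ) (hσ' : σ < (n : ℝ) / 2)
    (hM : 0 < M₀) (x : EuclideanSpace ℝ (Fin n)) (t : ℝ) (ht : 0 < t) :
    ∫ y : EuclideanSpace ℝ (Fin n),
        (2 / (2 * Real.pi ^ ((n : ℝ) / 2) / Real.Gamma ((n : ℝ) / 2)) *
            (Real.Gamma ((n : ℝ) / 2 + σ) / (Real.Gamma ((n : ℝ) / 2) * Real.Gamma σ))) *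
          t ^ (2 * σ) / (‖x - y‖ ^ 2 + t ^ 2) ^ (((n : ℝ) + 2 * σ) / 2) *
          (M₀ * ‖y‖ ^ (-(((n : ℝ) - 2 * σ) / 2))) =
      Real.Gamma (((n : ℝ) + 2 * σ) / 4) ^ 2 / (Real.Gamma ((n : ℝ) / 2) * Real.Gamma σ) *
        M₀ * (‖x‖ ^ 2 + t ^ 2) ^ (-(((n : ℝ) - 2 * σ) / 4)) *
        hyp2F1 (((n : ℝ) - 2 * σ) / 4) (((n : ℝ) - 2 * σ) / 4) ((n : ℝ) / 2)
          (‖x‖ ^ 2 / (‖x‖ ^ 2 + t ^ 2)) := by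
  have hn' : (2:ℝ) ≤ n := by exact_mod_cast hn
  set a := ((n : ℝ) - 2 * σ) / 4 with ha
  set b := ((n : ℝ) + 2 * σ) / 4 with hb
  have ha0 : 0 < a := by rw [ha]; linarith
  have hb0 : 0 < b := by rw [hb]; linarith
  have hab : a + b = (n : ℝ) / 2 := by rw [ha, hb]; ring
  have hGb := Real.Gamma_pos_of_pos hb0
  have hGa := Real.Gamma_pos_of_pos ha0
  have hGs := Real.Gamma_pos_of_pos hσ
  have hG2b : 0 < Real.Gamma (2 * b) := Real.Gamma_pos_of_pos (by positivity)
  have hGc : 0 < Real.Gamma ((n : ℝ) / 2) := Real.Gamma_pos_of_pos (by linarith)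
  have hpi : 0 < Real.pi ^ ((n : ℝ) / 2) := by positivity
  have hXT : 0 < ‖x‖ ^ 2 + t ^ 2 := by positivity
  have h := step4 n hn x (t ^ 2) a b ha0 hb0 hab (by positivity)
  have h2b : (n : ℝ) / 2 + σ = 2 * b := by rw [hb]; ring
  have e : ∀ y : EuclideanSpace ℝ (Fin n),
      (2 / (2 * Real.pi ^ ((n : ℝ) / 2) / Real.Gamma ((n : ℝ) / 2)) *
            (Real.Gamma ((n : ℝ) / 2 + σ) / (Real.Gamma ((n : ℝ) / 2) * Real.Gamma σ))) *
          t ^ (2 * σ) / (‖x - y‖ ^ 2 + t ^ 2) ^ (((n : ℝ) + 2 * σ) / 2) *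
          (M₀ * ‖y‖ ^ (-(((n : ℝ) - 2 * σ) / 2))) =
      (Real.Gamma (2 * b) / (Real.pi ^ ((n : ℝ) / 2) * Real.Gamma σ) * t ^ (2 * σ) * M₀) *
        ((‖x - y‖ ^ 2 + t ^ 2) ^ (-(2 * b)) * ‖y‖ ^ (-(2 * a))) := by
    intro y
    rw [h2b, show ((n : ℝ) + 2 * σ) / 2 = 2 * b by rw [hb]; ring,
      show ((n : ℝ) - 2 * σ) / 2 = 2 * a by rw [ha]; ring,
      Real.rpow_neg (x := ‖x - y‖ ^ 2 + t ^ 2) (by positivity)]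
    field_simp
  simp_rw [e]
  rw [MeasureTheory.integral_const_mul]
  generalize (∫ y : EuclideanSpace ℝ (Fin n),
    ((‖x - y‖ ^ 2 + t ^ 2) ^ (-(2 * b)) * ‖y‖ ^ (-(2 * a)))) = I at h ⊢
  have hts : t ^ (2 * σ) * ((t ^ 2 / (‖x‖ ^ 2 + t ^ 2)) ^ a * (t ^ 2) ^ (-b)) =
      (‖x‖ ^ 2 + t ^ 2) ^ (-a) := by
    have h2 : t ^ (2 * σ) = (t ^ 2) ^ σ := by
      rw [Real.rpow_mul ht.le]; norm_num
    have ht2 : 0 < t ^ 2 := by positivity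
    rw [h2, show σ = b - a by rw [ha, hb]; ring, Real.div_rpow ht2.le hXT.le,
      Real.rpow_sub ht2, Real.rpow_neg ht2.le, Real.rpow_neg hXT.le]
    field_simp
  rw [← hts]
  have hI : I = Real.Gamma b / Real.Gamma (2 * b) * ((t ^ 2 / (‖x‖ ^ 2 + t ^ 2)) ^ a *
      (t ^ 2) ^ (-b)) * Real.pi ^ ((n : ℝ) / 2) * (Real.Gamma b / Real.Gamma ((n : ℝ) / 2) *
        hyp2F1 a a ((n : ℝ) / 2) (‖x‖ ^ 2 / (‖x‖ ^ 2 + t ^ 2))) := by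
    have hne : Real.Gamma a * Real.Gamma (2 * b) ≠ 0 := by positivity
    apply mul_left_cancel₀ hne
    rw [mul_assoc, h]
    field_simp
  rw [hI]
  field_simp
end
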